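/- Let (A, μ, α, β) be a BiHom-associative algebra with α, β bijective, and let ψ, ω : A → A be linear maps with ψ(ab) = ψ(a)ψ(b) and ω(ab) = ω(a)ω(b) such that any two of α, β, ψ, ω commute. Let r, s ∈ A⊗A be α-, β-, ψ-, and ω-invariant, and define δ_r(a) = α⁻¹(a)▷r − r◁β⁻¹(a), δ_s(a) = α⁻¹(a)▷s − s◁β⁻¹(a), and Δ(a) = α⁻¹(a)▷r − s◁β⁻¹(a). Then (A, μ, δ_r, δ_s, Δ, α, β, ψ, ω) is a quasitriangular covariant BiHom-bialgebra (equivalently, (r, s) is an associative BiHom-Yang-Baxter pair of weight (0, 0)) if and only if (ω⊗Δ)(r) = r₁₃r₁₂ and (Δ⊗ψ)(s) = −s₂₃s₁₃. -/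

import Mathlib

/-!
Write `Δ = L - R` with `L a = α⁻¹(a) ▷ r` and `R a = s ◁ β⁻¹(a)`. Invariance gives
`(ω⊗L)(r) = r₁₂r₂₃`, `(ω⊗R)(r) = s₂₃r₁₃`, `(L⊗ψ)(s) = s₁₃r₁₂` and `(R⊗ψ)(s) = s₁₂s₂₃`, so the two
Yang–Baxter equations are exactly the two formulas for `(ω⊗Δ)(r)` and `(Δ⊗ψ)(s)`.

The bialgebra axioms other than coassociativity hold for all invariant `r, s`, because `A⊗A` is a
BiHom-bimodule. Coassociativity follows from the identity
`(Δ⊗ψ)Δ(a) - (ω⊗Δ)Δ(a)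
  = ωα⁻¹(a) ▷ (r₁₃r₁₂ - (ω⊗Δ)(r)) - ((Δ⊗ψ)(s) + s₂₃s₁₃) ◁ ψβ⁻¹(a)`,
where the cross terms `(R⊗ψ)(α⁻¹(a) ▷ r)` and `(ω⊗L)(s ◁ β⁻¹(a))` cancel by associativity in the
middle tensor factor.
-/

open TensorProduct

section Defs

variable {K A : Type*} [Field K] [NonUnitalNonAssocRing A] [Module K A]
  [SMulCommClass K A A] [IsScalarTower K A A]

/-- The left action of `A` on `A⊗A`: `a ▷ (x⊗y) = ω(a)x ⊗ β(y)`. -/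
noncomputable def lT2 (β ω : A →ₗ[K] A) (a : A) : A ⊗[K] A →ₗ[K] A ⊗[K] A :=
  TensorProduct.map (LinearMap.mulLeft K (ω a)) β

/-- The right action of `A` on `A⊗A`: `(x⊗y) ◁ a = α(x) ⊗ yψ(a)`. -/
noncomputable def rT2 (α ψ : A →ₗ[K] A) (a : A) : A ⊗[K] A →ₗ[K] A ⊗[K] A :=
  TensorProduct.map α (LinearMap.mulRight K (ψ a))

/-- The left action of `A` on `A⊗A⊗A`: `a ▷ (x⊗y⊗z) = ω(a)x ⊗ β(y) ⊗ β(z)`. -/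
noncomputable def lT3 (β ω : A →ₗ[K] A) (a : A) :
    A ⊗[K] (A ⊗[K] A) →ₗ[K] A ⊗[K] (A ⊗[K] A) :=
  TensorProduct.map (LinearMap.mulLeft K (ω a)) (TensorProduct.map β β)

/-- The right action of `A` on `A⊗A⊗A`: `(x⊗y⊗z) ◁ a = α(x) ⊗ α(y) ⊗ zψ(a)`. -/
noncomputable def rT3 (α ψ : A →ₗ[K] A) (a : A) :
    A ⊗[K] (A ⊗[K] A) →ₗ[K] A ⊗[K] (A ⊗[K] A) :=
  TensorProduct.map α (TensorProduct.map α (LinearMap.mulRight K (ψ a)))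

/-- The left action, bundled as a linear map in the acting variable. -/
noncomputable def lT2hom (β ω : A →ₗ[K] A) : A →ₗ[K] (A ⊗[K] A →ₗ[K] A ⊗[K] A) :=
  TensorProduct.homTensorHomMap (RingHom.id K) A A A A ∘ₗ
    (TensorProduct.mk K (A →ₗ[K] A) (A →ₗ[K] A)).flip β ∘ₗ LinearMap.mul K A ∘ₗ ω

/-- The right action, bundled as a linear map in the acting variable. -/
noncomputable def rT2hom (α ψ : A →ₗ[K] A) : A →ₗ[K] (A ⊗[K] A →ₗ[K] A ⊗[K] A) :=
  TensorProduct.homTensorHomMap (RingHom.id K) A A A A ∘ₗ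
    TensorProduct.mk K (A →ₗ[K] A) (A →ₗ[K] A) α ∘ₗ (LinearMap.mul K A).flip ∘ₗ ψ

/-- `a ↦ α⁻¹(a) ▷ r − s ◁ β⁻¹(a)`, as a linear map `A → A⊗A`. -/
noncomputable def deltaOp (α β : A ≃ₗ[K] A) (ψ ω : A →ₗ[K] A) (r s : A ⊗[K] A) :
    A →ₗ[K] A ⊗[K] A :=
  (lT2hom β.toLinearMap ω).flip r ∘ₗ α.symm.toLinearMap -
    (rT2hom α.toLinearMap ψ).flip s ∘ₗ β.symm.toLinearMap

/-- `r₁₂s₂₃ = α(r¹) ⊗ r²s¹ ⊗ β(s²)`, as a linear map on `(A⊗A)⊗(A⊗A)`. -/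
noncomputable def m1223 (α β : A →ₗ[K] A) :
    (A ⊗[K] A) ⊗[K] (A ⊗[K] A) →ₗ[K] A ⊗[K] (A ⊗[K] A) :=
  TensorProduct.map α (TensorProduct.map (LinearMap.mul' K A) β) ∘ₗ
    TensorProduct.map LinearMap.id (TensorProduct.assoc K A A A).symm.toLinearMap ∘ₗ
    (TensorProduct.assoc K A A (A ⊗[K] A)).toLinearMap

/-- `r₁₃s₁₂ = ω(r¹)s¹ ⊗ β(s²) ⊗ αψ(r²)`. -/
noncomputable def m1312 (α β ψ ω : A →ₗ[K] A) :
    (A ⊗[K] A) ⊗[K] (A ⊗[K] A) →ₗ[K] A ⊗[K] (A ⊗[K] A) :=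
  TensorProduct.map (LinearMap.mul' K A ∘ₗ TensorProduct.map ω LinearMap.id)
      ((TensorProduct.comm K A A).toLinearMap ∘ₗ TensorProduct.map (α ∘ₗ ψ) β) ∘ₗ
    (TensorProduct.tensorTensorTensorComm K A A A A).toLinearMap

/-- `r₂₃s₁₃ = βω(s¹) ⊗ α(r¹) ⊗ r²ψ(s²)`. -/
noncomputable def m2313 (α β ψ ω : A →ₗ[K] A) :
    (A ⊗[K] A) ⊗[K] (A ⊗[K] A) →ₗ[K] A ⊗[K] (A ⊗[K] A) :=
  (TensorProduct.assoc K A A A).toLinearMap ∘ₗ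
    TensorProduct.map ((TensorProduct.comm K A A).toLinearMap ∘ₗ TensorProduct.map α (β ∘ₗ ω))
      (LinearMap.mul' K A ∘ₗ TensorProduct.map LinearMap.id ψ) ∘ₗ
    (TensorProduct.tensorTensorTensorComm K A A A A).toLinearMap

end Defs

/-- The coalgebra-side axioms of a covariant BiHom-bialgebra
`(A, μ, δ₁, δ₂, Δ, α, β, ψ, ω)`: `Δ` is compatible with `α, β, ψ, ω` and
BiHom-coassociative, `δ₁, δ₂` are BiHom-derivations, and `Δ` is a covariant
BiHom-derivation with respect to `(δ₁, δ₂)`. -/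
noncomputable def IsCovariantBiHomBialgebra {K A : Type*} [Field K]
    [NonUnitalNonAssocRing A] [Module K A] [SMulCommClass K A A] [IsScalarTower K A A]
    (α β ψ ω : A →ₗ[K] A) (δ₁ δ₂ Δ : A →ₗ[K] A ⊗[K] A) : Prop :=
  (∀ a, TensorProduct.map ψ ψ (Δ a) = Δ (ψ a)) ∧
  (∀ a, TensorProduct.map ω ω (Δ a) = Δ (ω a)) ∧
  (∀ a, TensorProduct.map α α (Δ a) = Δ (α a)) ∧
  (∀ a, TensorProduct.map β β (Δ a) = Δ (β a)) ∧
  -- BiHom-coassociativity: (Δ⊗ψ)∘Δ = (ω⊗Δ)∘Δ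
  (∀ a, TensorProduct.assoc K A A A (TensorProduct.map Δ ψ (Δ a)) =
    TensorProduct.map ω Δ (Δ a)) ∧
  -- δ₁ is a BiHom-derivation
  (∀ a, TensorProduct.map α α (δ₁ a) = δ₁ (α a)) ∧
  (∀ a, TensorProduct.map β β (δ₁ a) = δ₁ (β a)) ∧
  (∀ a, TensorProduct.map ψ ψ (δ₁ a) = δ₁ (ψ a)) ∧
  (∀ a, TensorProduct.map ω ω (δ₁ a) = δ₁ (ω a)) ∧
  (∀ a b, δ₁ (a * b) = lT2 β ω a (δ₁ b) + rT2 α ψ b (δ₁ a)) ∧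
  -- δ₂ is a BiHom-derivation
  (∀ a, TensorProduct.map α α (δ₂ a) = δ₂ (α a)) ∧
  (∀ a, TensorProduct.map β β (δ₂ a) = δ₂ (β a)) ∧
  (∀ a, TensorProduct.map ψ ψ (δ₂ a) = δ₂ (ψ a)) ∧
  (∀ a, TensorProduct.map ω ω (δ₂ a) = δ₂ (ω a)) ∧
  (∀ a b, δ₂ (a * b) = lT2 β ω a (δ₂ b) + rT2 α ψ b (δ₂ a)) ∧
  -- Δ is a covariant BiHom-derivation with respect to (δ₁, δ₂)
  (∀ a b, Δ (a * b) = rT2 α ψ b (Δ a) + lT2 β ω a (δ₁ b)) ∧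
  (∀ a b, Δ (a * b) = lT2 β ω a (Δ b) + rT2 α ψ b (δ₂ a))

section TensorMap

variable {R M N P Q : Type*} [CommRing R] [AddCommGroup M] [AddCommGroup N] [AddCommGroup P]
  [AddCommGroup Q] [Module R M] [Module R N] [Module R P] [Module R Q]

theorem tensorMap_sub_left (f g : M →ₗ[R] P) (h : N →ₗ[R] Q) :
    TensorProduct.map (f - g) h = TensorProduct.map f h - TensorProduct.map g h :=
  (TensorProduct.mapBilinear (.id R) M N P Q).map_sub₂ f g h

theorem tensorMap_sub_right (f : M →ₗ[R] P) (g h : N →ₗ[R] Q) :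
    TensorProduct.map f (g - h) = TensorProduct.map f g - TensorProduct.map f h :=
  (TensorProduct.mapBilinear (.id R) M N P Q f).map_sub g h

end TensorMap

section LeftAction

variable {K A : Type*} [Field K] [NonUnitalNonAssocRing A] [Module K A]
  [SMulCommClass K A A] {α β ψ ω : A →ₗ[K] A} {D : A →ₗ[K] A ⊗[K] A}

theorem lT2_tmul (a x y : A) : lT2 β ω a (x ⊗ₜ[K] y) = (ω a * x) ⊗ₜ β y := rfl

theorem lT3_tmul (a x : A) (t : A ⊗[K] A) :
    lT3 β ω a (x ⊗ₜ t) = (ω a * x) ⊗ₜ TensorProduct.map β β t := rfl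

theorem lT3_assoc_tmul (a z : A) (t : A ⊗[K] A) :
    lT3 β ω a (TensorProduct.assoc K A A A (t ⊗ₜ z)) =
      TensorProduct.assoc K A A A (lT2 β ω a t ⊗ₜ β z) := by
  induction t with
  | zero => simp only [TensorProduct.zero_tmul, map_zero]
  | tmul x y => rfl
  | add t u ht hu => simp only [TensorProduct.add_tmul, map_add, ht, hu]

theorem map_lT2 {f : A →ₗ[K] A} (hmul : ∀ a b, f (a * b) = f a * f b)
    (hβ : ∀ a, f (β a) = β (f a)) (hω : ∀ a, f (ω a) = ω (f a)) (a : A) (t : A ⊗[K] A) :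
    TensorProduct.map f f (lT2 β ω a t) = lT2 β ω (f a) (TensorProduct.map f f t) := by
  induction t with
  | zero => simp only [map_zero]
  | tmul x y => simp only [lT2_tmul, TensorProduct.map_tmul, hmul, hβ, hω]
  | add t u ht hu => simp only [map_add, ht, hu]

theorem lT2_lT2 (hassoc : ∀ a b c, α a * (b * c) = (a * b) * β c)
    (hωmul : ∀ a b, ω (a * b) = ω a * ω b) (hαω : ∀ a, α (ω a) = ω (α a))
    (a b : A) (t : A ⊗[K] A) :
    lT2 β ω (α a) (lT2 β ω b t) = lT2 β ω (a * b) (TensorProduct.map β β t) := by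
  induction t with
  | zero => simp only [map_zero]
  | tmul x y => simp only [lT2_tmul, TensorProduct.map_tmul, ← hαω, hassoc, hωmul]
  | add t u ht hu => simp only [map_add, ht, hu]

theorem map_lT2_of_comm (hωmul : ∀ a b, ω (a * b) = ω a * ω b)
    (hD : ∀ a, TensorProduct.map β β (D a) = D (β a)) (a : A) (t : A ⊗[K] A) :
    TensorProduct.map ω D (lT2 β ω a t) = lT3 β ω (ω a) (TensorProduct.map ω D t) := by
  induction t with
  | zero => simp only [map_zero]
  | tmul x y => simp only [lT2_tmul, TensorProduct.map_tmul, lT3_tmul, hωmul, hD]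
  | add t u ht hu => simp only [map_add, ht, hu]

theorem assoc_map_lT2_of_left_linear (hβψ : ∀ a, β (ψ a) = ψ (β a))
    (hD : ∀ a b, D (a * b) = lT2 β ω a (D b)) (a : A) (t : A ⊗[K] A) :
    TensorProduct.assoc K A A A (TensorProduct.map D ψ (lT2 β ω a t)) =
      lT3 β ω (ω a) (TensorProduct.assoc K A A A (TensorProduct.map D ψ t)) := by
  induction t with
  | zero => simp only [map_zero]
  | tmul x y => simp only [lT2_tmul, TensorProduct.map_tmul, lT3_assoc_tmul, hβψ, hD]
  | add t u ht hu => simp only [map_add, ht, hu]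

end LeftAction

section RightAction

variable {K A : Type*} [Field K] [NonUnitalNonAssocRing A] [Module K A]
  [IsScalarTower K A A] {α β ψ ω : A →ₗ[K] A} {D : A →ₗ[K] A ⊗[K] A}

theorem rT2_tmul (a x y : A) : rT2 α ψ a (x ⊗ₜ[K] y) = α x ⊗ₜ (y * ψ a) := rfl

theorem rT3_tmul (a x : A) (t : A ⊗[K] A) : rT3 α ψ a (x ⊗ₜ t) = α x ⊗ₜ rT2 α ψ a t := rfl

theorem rT3_assoc_tmul (a z : A) (t : A ⊗[K] A) :
    rT3 α ψ a (TensorProduct.assoc K A A A (t ⊗ₜ z)) =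
      TensorProduct.assoc K A A A (TensorProduct.map α α t ⊗ₜ (z * ψ a)) := by
  induction t with
  | zero => simp only [TensorProduct.zero_tmul, map_zero]
  | tmul x y => rfl
  | add t u ht hu => simp only [TensorProduct.add_tmul, map_add, ht, hu]

theorem map_rT2 {f : A →ₗ[K] A} (hmul : ∀ a b, f (a * b) = f a * f b)
    (hα : ∀ a, f (α a) = α (f a)) (hψ : ∀ a, f (ψ a) = ψ (f a)) (a : A) (t : A ⊗[K] A) :
    TensorProduct.map f f (rT2 α ψ a t) = rT2 α ψ (f a) (TensorProduct.map f f t) := by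
  induction t with
  | zero => simp only [map_zero]
  | tmul x y => simp only [rT2_tmul, TensorProduct.map_tmul, hmul, hα, hψ]
  | add t u ht hu => simp only [map_add, ht, hu]

theorem rT2_rT2 (hassoc : ∀ a b c, α a * (b * c) = (a * b) * β c)
    (hψmul : ∀ a b, ψ (a * b) = ψ a * ψ b) (hβψ : ∀ a, β (ψ a) = ψ (β a))
    (a b : A) (t : A ⊗[K] A) :
    rT2 α ψ (β b) (rT2 α ψ a t) = rT2 α ψ (a * b) (TensorProduct.map α α t) := by
  induction t with
  | zero => simp only [map_zero]
  | tmul x y => simp only [rT2_tmul, TensorProduct.map_tmul, ← hβψ, hassoc, hψmul]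
  | add t u ht hu => simp only [map_add, ht, hu]

theorem assoc_map_rT2_of_comm (hψmul : ∀ a b, ψ (a * b) = ψ a * ψ b)
    (hD : ∀ a, TensorProduct.map α α (D a) = D (α a)) (a : A) (t : A ⊗[K] A) :
    TensorProduct.assoc K A A A (TensorProduct.map D ψ (rT2 α ψ a t)) =
      rT3 α ψ (ψ a) (TensorProduct.assoc K A A A (TensorProduct.map D ψ t)) := by
  induction t with
  | zero => simp only [map_zero]
  | tmul x y => simp only [rT2_tmul, TensorProduct.map_tmul, rT3_assoc_tmul, hψmul, hD]
  | add t u ht hu => simp only [map_add, ht, hu]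

theorem map_rT2_of_right_linear (hαω : ∀ a, α (ω a) = ω (α a))
    (hD : ∀ a b, D (a * b) = rT2 α ψ b (D a)) (a : A) (t : A ⊗[K] A) :
    TensorProduct.map ω D (rT2 α ψ a t) = rT3 α ψ (ψ a) (TensorProduct.map ω D t) := by
  induction t with
  | zero => simp only [map_zero]
  | tmul x y => simp only [rT2_tmul, TensorProduct.map_tmul, rT3_tmul, hαω, hD]
  | add t u ht hu => simp only [map_add, ht, hu]

end RightAction

section Bimodule

variable {K A : Type*} [Field K] [NonUnitalNonAssocRing A] [Module K A]
  [SMulCommClass K A A] [IsScalarTower K A A] {α β ψ ω : A →ₗ[K] A} {D : A →ₗ[K] A ⊗[K] A}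

theorem lT2_rT2 (hαmul : ∀ a b, α (a * b) = α a * α b) (hβmul : ∀ a b, β (a * b) = β a * β b)
    (hαω : ∀ a, α (ω a) = ω (α a)) (hβψ : ∀ a, β (ψ a) = ψ (β a)) (a b : A) (t : A ⊗[K] A) :
    lT2 β ω (α a) (rT2 α ψ b t) = rT2 α ψ (β b) (lT2 β ω a t) := by
  induction t with
  | zero => simp only [map_zero]
  | tmul x y => simp only [lT2_tmul, rT2_tmul, hαmul, hβmul, hαω, hβψ]
  | add t u ht hu => simp only [map_add, ht, hu]

theorem m1223_tmul_tmul (x y z w : A) :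
    m1223 α β ((x ⊗ₜ[K] y) ⊗ₜ (z ⊗ₜ w)) = α x ⊗ₜ ((y * z) ⊗ₜ β w) := rfl

theorem m1223_tmul_left (x y : A) (t : A ⊗[K] A) :
    m1223 α β ((x ⊗ₜ[K] ω y) ⊗ₜ t) = α x ⊗ₜ lT2 β ω y t := by
  induction t with
  | zero => simp only [TensorProduct.tmul_zero, map_zero]
  | tmul z w => rfl
  | add t u ht hu => simp only [TensorProduct.tmul_add, map_add, ht, hu]

theorem m1223_tmul_right (x y : A) (t : A ⊗[K] A) :
    m1223 α β (t ⊗ₜ[K] (ψ x ⊗ₜ y)) = TensorProduct.assoc K A A A (rT2 α ψ x t ⊗ₜ β y) := by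
  induction t with
  | zero => simp only [TensorProduct.zero_tmul, map_zero]
  | tmul z w => rfl
  | add t u ht hu => simp only [TensorProduct.add_tmul, map_add, ht, hu]

theorem m1312_tmul_left (x y : A) (t : A ⊗[K] A) :
    m1312 α β ψ ω ((x ⊗ₜ[K] y) ⊗ₜ t) =
      TensorProduct.assoc K A A A (lT2 β ω x t ⊗ₜ α (ψ y)) := by
  induction t with
  | zero => simp only [TensorProduct.tmul_zero, TensorProduct.zero_tmul, map_zero]
  | tmul z w => rfl
  | add t u ht hu => simp only [TensorProduct.tmul_add, TensorProduct.add_tmul, map_add, ht, hu]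

theorem m2313_tmul_right (x y : A) (t : A ⊗[K] A) :
    m2313 α β ψ ω (t ⊗ₜ[K] (x ⊗ₜ y)) = β (ω x) ⊗ₜ rT2 α ψ y t := by
  induction t with
  | zero => simp only [TensorProduct.tmul_zero, TensorProduct.zero_tmul, map_zero]
  | tmul z w => rfl
  | add t u ht hu => simp only [TensorProduct.tmul_add, TensorProduct.add_tmul, map_add, ht, hu]

theorem m1223_rT2_tmul_map (hassoc : ∀ a b c, α a * (b * c) = (a * b) * β c)
    (hψω : ∀ a, ψ (ω a) = ω (ψ a)) (a : A) (t u : A ⊗[K] A) :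
    m1223 α β (rT2 α ψ (ω a) t ⊗ₜ TensorProduct.map β β u) =
      m1223 α β (TensorProduct.map α α t ⊗ₜ lT2 β ω (ψ a) u) := by
  have hlin : m1223 α β ∘ₗ TensorProduct.map (rT2 α ψ (ω a)) (TensorProduct.map β β) =
      m1223 α β ∘ₗ TensorProduct.map (TensorProduct.map α α) (lT2 β ω (ψ a)) :=
    TensorProduct.ext_fourfold' fun x y z w => by
      simp only [LinearMap.comp_apply, TensorProduct.map_tmul, rT2_tmul, lT2_tmul,
        m1223_tmul_tmul, hassoc, hψω]
  exact DFunLike.congr_fun hlin (t ⊗ₜ u)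

theorem assoc_map_lT2_of_right_linear (hβψ : ∀ a, β (ψ a) = ψ (β a))
    (hD : ∀ a b, D (a * b) = rT2 α ψ b (D a)) (a : A) (t : A ⊗[K] A) :
    TensorProduct.assoc K A A A (TensorProduct.map D ψ (lT2 β ω a t)) =
      m1223 α β (D (ω a) ⊗ₜ TensorProduct.map ψ ψ t) := by
  induction t with
  | zero => simp only [map_zero, TensorProduct.tmul_zero]
  | tmul x y => simp only [lT2_tmul, TensorProduct.map_tmul, m1223_tmul_right, hβψ, hD]
  | add t u ht hu => simp only [map_add, TensorProduct.tmul_add, ht, hu]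

theorem map_rT2_of_left_linear (hαω : ∀ a, α (ω a) = ω (α a))
    (hD : ∀ a b, D (a * b) = lT2 β ω a (D b)) (a : A) (t : A ⊗[K] A) :
    TensorProduct.map ω D (rT2 α ψ a t) =
      m1223 α β (TensorProduct.map ω ω t ⊗ₜ D (ψ a)) := by
  induction t with
  | zero => simp only [map_zero, TensorProduct.zero_tmul]
  | tmul x y => simp only [rT2_tmul, TensorProduct.map_tmul, m1223_tmul_left, hαω, hD]
  | add t u ht hu => simp only [map_add, TensorProduct.add_tmul, ht, hu]

end Bimodule

section Inner

variable {K A : Type*} [Field K] [NonUnitalNonAssocRing A] [Module K A]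
  [SMulCommClass K A A] [IsScalarTower K A A] {α β : A ≃ₗ[K] A} {ψ ω : A →ₗ[K] A}

/-- The left part `a ↦ α⁻¹(a) ▷ t` of the inner maps `deltaOp`. -/
noncomputable def leftInner (α β : A ≃ₗ[K] A) (ω : A →ₗ[K] A) (t : A ⊗[K] A) :
    A →ₗ[K] A ⊗[K] A :=
  (lT2hom β.toLinearMap ω).flip t ∘ₗ α.symm.toLinearMap

/-- The right part `a ↦ t ◁ β⁻¹(a)` of the inner maps `deltaOp`. -/
noncomputable def rightInner (α β : A ≃ₗ[K] A) (ψ : A →ₗ[K] A) (t : A ⊗[K] A) :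
    A →ₗ[K] A ⊗[K] A :=
  (rT2hom α.toLinearMap ψ).flip t ∘ₗ β.symm.toLinearMap

theorem leftInner_apply (t : A ⊗[K] A) (a : A) :
    leftInner α β ω t a = lT2 β.toLinearMap ω (α.symm a) t := rfl

theorem rightInner_apply (t : A ⊗[K] A) (a : A) :
    rightInner α β ψ t a = rT2 α.toLinearMap ψ (β.symm a) t := rfl

theorem leftInner_mul (hassoc : ∀ a b c, α a * (b * c) = (a * b) * β c)
    (hαmul : ∀ a b, α (a * b) = α a * α b) (hωmul : ∀ a b, ω (a * b) = ω a * ω b)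
    (hαω : ∀ a, α (ω a) = ω (α a)) {t : A ⊗[K] A}
    (htβ : TensorProduct.map β.toLinearMap β.toLinearMap t = t) (a b : A) :
    leftInner α β ω t (a * b) = lT2 β.toLinearMap ω a (leftInner α β ω t b) := by
  obtain ⟨a, rfl⟩ := α.surjective a
  obtain ⟨b, rfl⟩ := α.surjective b
  simpa only [leftInner_apply, LinearEquiv.coe_coe, ← hαmul, LinearEquiv.symm_apply_apply, htβ]
    using (lT2_lT2 (α := α.toLinearMap) (β := β.toLinearMap) hassoc hωmul hαω a b t).symm

theorem rightInner_mul (hassoc : ∀ a b c, α a * (b * c) = (a * b) * β c)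
    (hβmul : ∀ a b, β (a * b) = β a * β b) (hψmul : ∀ a b, ψ (a * b) = ψ a * ψ b)
    (hβψ : ∀ a, β (ψ a) = ψ (β a)) {t : A ⊗[K] A}
    (htα : TensorProduct.map α.toLinearMap α.toLinearMap t = t) (a b : A) :
    rightInner α β ψ t (a * b) = rT2 α.toLinearMap ψ b (rightInner α β ψ t a) := by
  obtain ⟨a, rfl⟩ := β.surjective a
  obtain ⟨b, rfl⟩ := β.surjective b
  simpa only [rightInner_apply, LinearEquiv.coe_coe, ← hβmul, LinearEquiv.symm_apply_apply, htα]
    using (rT2_rT2 (α := α.toLinearMap) (β := β.toLinearMap) hassoc hψmul hβψ a b t).symm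

theorem lT2_rightInner (hαmul : ∀ a b, α (a * b) = α a * α b)
    (hβmul : ∀ a b, β (a * b) = β a * β b) (hαω : ∀ a, α (ω a) = ω (α a))
    (hβψ : ∀ a, β (ψ a) = ψ (β a)) (a b : A) (t : A ⊗[K] A) :
    lT2 β.toLinearMap ω a (rightInner α β ψ t b) =
      rT2 α.toLinearMap ψ b (leftInner α β ω t a) := by
  simpa only [leftInner_apply, rightInner_apply, LinearEquiv.coe_coe,
    LinearEquiv.apply_symm_apply] using
    lT2_rT2 (α := α.toLinearMap) (β := β.toLinearMap) hαmul hβmul hαω hβψ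
      (α.symm a) (β.symm b) t

theorem m1223_rightInner_tmul (hassoc : ∀ a b c, α a * (b * c) = (a * b) * β c)
    (hψω : ∀ a, ψ (ω a) = ω (ψ a)) {t u : A ⊗[K] A}
    (htα : TensorProduct.map α.toLinearMap α.toLinearMap t = t)
    (huβ : TensorProduct.map β.toLinearMap β.toLinearMap u = u) (a : A) :
    m1223 α.toLinearMap β.toLinearMap (rightInner α β ψ t (β (ω a)) ⊗ₜ u) =
      m1223 α.toLinearMap β.toLinearMap (t ⊗ₜ leftInner α β ω u (α (ψ a))) := by
  simpa only [leftInner_apply, rightInner_apply, LinearEquiv.symm_apply_apply, htα, huβ] using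
    m1223_rT2_tmul_map (α := α.toLinearMap) (β := β.toLinearMap) hassoc hψω a t u

theorem map_leftInner (hαω : ∀ a, α (ω a) = ω (α a)) {t : A ⊗[K] A}
    (htα : TensorProduct.map α.toLinearMap α.toLinearMap t = t)
    (htω : TensorProduct.map ω ω t = t) (u : A ⊗[K] A) :
    TensorProduct.map ω (leftInner α β ω u) t =
      m1223 α.toLinearMap β.toLinearMap (t ⊗ₜ u) := by
  conv_lhs => rw [← htα]
  conv_rhs => rw [← htω]
  clear htα htω
  induction t with
  | zero => simp only [map_zero, TensorProduct.zero_tmul]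
  | tmul x y =>
    simp only [TensorProduct.map_tmul, m1223_tmul_left, leftInner_apply, LinearEquiv.coe_coe,
      LinearEquiv.symm_apply_apply, hαω]
  | add t t' ht ht' => simp only [map_add, TensorProduct.add_tmul, ht, ht']

theorem map_rightInner (hβω : ∀ a, β (ω a) = ω (β a)) {t : A ⊗[K] A}
    (htβ : TensorProduct.map β.toLinearMap β.toLinearMap t = t) (u : A ⊗[K] A) :
    TensorProduct.map ω (rightInner α β ψ u) t =
      m2313 α.toLinearMap β.toLinearMap ψ ω (u ⊗ₜ t) := by
  conv_lhs => rw [← htβ]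
  clear htβ
  induction t with
  | zero => simp only [map_zero, TensorProduct.tmul_zero]
  | tmul x y =>
    simp only [TensorProduct.map_tmul, m2313_tmul_right, rightInner_apply, LinearEquiv.coe_coe,
      LinearEquiv.symm_apply_apply, hβω]
  | add t t' ht ht' => simp only [map_add, TensorProduct.tmul_add, ht, ht']

theorem assoc_map_leftInner (hαψ : ∀ a, α (ψ a) = ψ (α a)) {t : A ⊗[K] A}
    (htα : TensorProduct.map α.toLinearMap α.toLinearMap t = t) (u : A ⊗[K] A) :
    TensorProduct.assoc K A A A (TensorProduct.map (leftInner α β ω u) ψ t) =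
      m1312 α.toLinearMap β.toLinearMap ψ ω (t ⊗ₜ u) := by
  conv_lhs => rw [← htα]
  clear htα
  induction t with
  | zero => simp only [map_zero, TensorProduct.zero_tmul]
  | tmul x y =>
    simp only [TensorProduct.map_tmul, m1312_tmul_left, leftInner_apply, LinearEquiv.coe_coe,
      LinearEquiv.symm_apply_apply, hαψ]
  | add t t' ht ht' => simp only [map_add, TensorProduct.add_tmul, ht, ht']

theorem assoc_map_rightInner (hβψ : ∀ a, β (ψ a) = ψ (β a)) {t : A ⊗[K] A}
    (htβ : TensorProduct.map β.toLinearMap β.toLinearMap t = t)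
    (htψ : TensorProduct.map ψ ψ t = t) (u : A ⊗[K] A) :
    TensorProduct.assoc K A A A (TensorProduct.map (rightInner α β ψ u) ψ t) =
      m1223 α.toLinearMap β.toLinearMap (u ⊗ₜ t) := by
  conv_lhs => rw [← htβ]
  conv_rhs => rw [← htψ]
  clear htβ htψ
  induction t with
  | zero => simp only [map_zero, TensorProduct.tmul_zero]
  | tmul x y =>
    simp only [TensorProduct.map_tmul, m1223_tmul_right, rightInner_apply, LinearEquiv.coe_coe,
      LinearEquiv.symm_apply_apply, hβψ]
  | add t t' ht ht' => simp only [map_add, TensorProduct.tmul_add, ht, ht']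

end Inner

section Delta

variable {K A : Type*} [Field K] [NonUnitalNonAssocRing A] [Module K A]
  [SMulCommClass K A A] [IsScalarTower K A A] {α β : A ≃ₗ[K] A} {ψ ω : A →ₗ[K] A}
  {r s : A ⊗[K] A}

theorem deltaOp_eq_leftInner_sub_rightInner (t u : A ⊗[K] A) :
    deltaOp α β ψ ω t u = leftInner α β ω t - rightInner α β ψ u := rfl

theorem deltaOp_apply (t u : A ⊗[K] A) (a : A) :
    deltaOp α β ψ ω t u a =
      lT2 β.toLinearMap ω (α.symm a) t - rT2 α.toLinearMap ψ (β.symm a) u := rfl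

theorem yangBaxter_left_iff (hαω : ∀ a, α (ω a) = ω (α a)) (hβω : ∀ a, β (ω a) = ω (β a))
    (hrα : TensorProduct.map α.toLinearMap α.toLinearMap r = r)
    (hrβ : TensorProduct.map β.toLinearMap β.toLinearMap r = r)
    (hrω : TensorProduct.map ω ω r = r) :
    m1312 α.toLinearMap β.toLinearMap ψ ω (r ⊗ₜ[K] r)
        - m1223 α.toLinearMap β.toLinearMap (r ⊗ₜ[K] r)
        + m2313 α.toLinearMap β.toLinearMap ψ ω (s ⊗ₜ[K] r) = 0 ↔
      TensorProduct.map ω (deltaOp α β ψ ω r s) r =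
        m1312 α.toLinearMap β.toLinearMap ψ ω (r ⊗ₜ[K] r) := by
  rw [deltaOp_eq_leftInner_sub_rightInner, tensorMap_sub_right, LinearMap.sub_apply,
    map_leftInner hαω hrα hrω, map_rightInner hβω hrβ, sub_add, sub_eq_zero, eq_comm]

theorem yangBaxter_right_iff (hαψ : ∀ a, α (ψ a) = ψ (α a)) (hβψ : ∀ a, β (ψ a) = ψ (β a))
    (hsα : TensorProduct.map α.toLinearMap α.toLinearMap s = s)
    (hsβ : TensorProduct.map β.toLinearMap β.toLinearMap s = s)
    (hsψ : TensorProduct.map ψ ψ s = s) :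
    m1312 α.toLinearMap β.toLinearMap ψ ω (s ⊗ₜ[K] r)
        - m1223 α.toLinearMap β.toLinearMap (s ⊗ₜ[K] s)
        + m2313 α.toLinearMap β.toLinearMap ψ ω (s ⊗ₜ[K] s) = 0 ↔
      TensorProduct.assoc K A A A (TensorProduct.map (deltaOp α β ψ ω r s) ψ s) =
        -m2313 α.toLinearMap β.toLinearMap ψ ω (s ⊗ₜ[K] s) := by
  rw [deltaOp_eq_leftInner_sub_rightInner, tensorMap_sub_left, LinearMap.sub_apply, map_sub,
    assoc_map_leftInner hαψ hsα, assoc_map_rightInner hβψ hsβ hsψ, add_eq_zero_iff_eq_neg]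

theorem deltaOp_mul (hassoc : ∀ a b c, α a * (b * c) = (a * b) * β c)
    (hαmul : ∀ a b, α (a * b) = α a * α b) (hβmul : ∀ a b, β (a * b) = β a * β b)
    (hψmul : ∀ a b, ψ (a * b) = ψ a * ψ b) (hωmul : ∀ a b, ω (a * b) = ω a * ω b)
    (hαω : ∀ a, α (ω a) = ω (α a)) (hβψ : ∀ a, β (ψ a) = ψ (β a))
    (hrβ : TensorProduct.map β.toLinearMap β.toLinearMap r = r)
    (hsα : TensorProduct.map α.toLinearMap α.toLinearMap s = s) (t : A ⊗[K] A) (a b : A) :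
    deltaOp α β ψ ω r s (a * b) =
      lT2 β.toLinearMap ω a (deltaOp α β ψ ω r t b) +
        rT2 α.toLinearMap ψ b (deltaOp α β ψ ω t s a) := by
  simp only [deltaOp_eq_leftInner_sub_rightInner, LinearMap.sub_apply, map_sub,
    leftInner_mul hassoc hαmul hωmul hαω hrβ, rightInner_mul hassoc hβmul hψmul hβψ hsα,
    lT2_rightInner hαmul hβmul hαω hβψ, sub_add_sub_cancel]

/-- `f` is an algebra endomorphism commuting with the four structure maps `α, β, ψ, ω`. Applied to
`f = α, β, ψ, ω` themselves, this packages multiplicativity and pairwise commutation. -/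
structure IsBiHomEndomorphism (α β ψ ω f : A →ₗ[K] A) : Prop where
  map_mul : ∀ a b, f (a * b) = f a * f b
  comm_α : ∀ a, f (α a) = α (f a)
  comm_β : ∀ a, f (β a) = β (f a)
  comm_ψ : ∀ a, f (ψ a) = ψ (f a)
  comm_ω : ∀ a, f (ω a) = ω (f a)

theorem IsBiHomEndomorphism.map_deltaOp {f : A →ₗ[K] A}
    (hf : IsBiHomEndomorphism α.toLinearMap β.toLinearMap ψ ω f)
    (hr : TensorProduct.map f f r = r) (hs : TensorProduct.map f f s = s) (a : A) :
    TensorProduct.map f f (deltaOp α β ψ ω r s a) = deltaOp α β ψ ω r s (f a) := by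
  have hαsymm : f (α.symm a) = α.symm (f a) := by
    simpa using congrArg α.symm (hf.comm_α (α.symm a)).symm
  have hβsymm : f (β.symm a) = β.symm (f a) := by
    simpa using congrArg β.symm (hf.comm_β (β.symm a)).symm
  rw [deltaOp_apply, map_sub, map_lT2 hf.map_mul hf.comm_β hf.comm_ω,
    map_rT2 hf.map_mul hf.comm_α hf.comm_ψ, hr, hs, hαsymm, hβsymm, deltaOp_apply]

section Coassociativity

variable (hassoc : ∀ a b c, α a * (b * c) = (a * b) * β c)
  (hα : IsBiHomEndomorphism α.toLinearMap β.toLinearMap ψ ω α.toLinearMap)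
  (hβ : IsBiHomEndomorphism α.toLinearMap β.toLinearMap ψ ω β.toLinearMap)
  (hψ : IsBiHomEndomorphism α.toLinearMap β.toLinearMap ψ ω ψ)
  (hω : IsBiHomEndomorphism α.toLinearMap β.toLinearMap ψ ω ω)
  (hrα : TensorProduct.map α.toLinearMap α.toLinearMap r = r)
  (hrβ : TensorProduct.map β.toLinearMap β.toLinearMap r = r)
  (hrψ : TensorProduct.map ψ ψ r = r)
  (hsα : TensorProduct.map α.toLinearMap α.toLinearMap s = s)
  (hsβ : TensorProduct.map β.toLinearMap β.toLinearMap s = s)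
  (hsω : TensorProduct.map ω ω s = s)

include hassoc hα hβ hψ hω hrβ hrψ hsα hsω

theorem assoc_map_rightInner_lT2 (a : A) :
    TensorProduct.assoc K A A A
        (TensorProduct.map (rightInner α β ψ s) ψ (lT2 β.toLinearMap ω (α.symm a) r)) =
      TensorProduct.map ω (leftInner α β ω r) (rT2 α.toLinearMap ψ (β.symm a) s) := by
  rw [assoc_map_lT2_of_right_linear hβ.comm_ψ
      (rightInner_mul hassoc hβ.map_mul hψ.map_mul hβ.comm_ψ hsα),
    map_rT2_of_left_linear hα.comm_ω (leftInner_mul hassoc hα.map_mul hω.map_mul hα.comm_ω hrβ),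
    hrψ, hsω]
  obtain ⟨d, rfl⟩ := (β.trans α).surjective a
  have hαβd : α (β d) = β (α d) := hα.comm_β d
  have hωβd : ω (β d) = β (ω d) := hω.comm_β d
  have hψαd : ψ (α d) = α (ψ d) := hψ.comm_α d
  rw [LinearEquiv.trans_apply, LinearEquiv.symm_apply_apply, hαβd, LinearEquiv.symm_apply_apply,
    hωβd, hψαd]
  exact m1223_rightInner_tmul hassoc hψ.comm_ω hsα hrβ d

include hrα hsβ

theorem coassociator_deltaOp (a : A) :
    TensorProduct.assoc K A A A
          (TensorProduct.map (deltaOp α β ψ ω r s) ψ (deltaOp α β ψ ω r s a)) -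
        TensorProduct.map ω (deltaOp α β ψ ω r s) (deltaOp α β ψ ω r s a) =
      lT3 β.toLinearMap ω (ω (α.symm a))
          (m1312 α.toLinearMap β.toLinearMap ψ ω (r ⊗ₜ[K] r) -
            TensorProduct.map ω (deltaOp α β ψ ω r s) r) -
        rT3 α.toLinearMap ψ (ψ (β.symm a))
          (TensorProduct.assoc K A A A (TensorProduct.map (deltaOp α β ψ ω r s) ψ s) +
            m2313 α.toLinearMap β.toLinearMap ψ ω (s ⊗ₜ[K] s)) := by
  have hleft : TensorProduct.assoc K A A A
        (TensorProduct.map (deltaOp α β ψ ω r s) ψ (lT2 β.toLinearMap ω (α.symm a) r)) =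
      lT3 β.toLinearMap ω (ω (α.symm a)) (m1312 α.toLinearMap β.toLinearMap ψ ω (r ⊗ₜ[K] r)) -
        TensorProduct.assoc K A A A
          (TensorProduct.map (rightInner α β ψ s) ψ (lT2 β.toLinearMap ω (α.symm a) r)) := by
    rw [deltaOp_eq_leftInner_sub_rightInner, tensorMap_sub_left, LinearMap.sub_apply, map_sub,
      assoc_map_lT2_of_left_linear hβ.comm_ψ
        (leftInner_mul hassoc hα.map_mul hω.map_mul hα.comm_ω hrβ),
      assoc_map_leftInner hα.comm_ψ hrα]
  have hright : TensorProduct.map ω (deltaOp α β ψ ω r s)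
        (rT2 α.toLinearMap ψ (β.symm a) s) =
      TensorProduct.map ω (leftInner α β ω r) (rT2 α.toLinearMap ψ (β.symm a) s) -
        rT3 α.toLinearMap ψ (ψ (β.symm a))
          (m2313 α.toLinearMap β.toLinearMap ψ ω (s ⊗ₜ[K] s)) := by
    rw [deltaOp_eq_leftInner_sub_rightInner, tensorMap_sub_right, LinearMap.sub_apply,
      map_rT2_of_right_linear hα.comm_ω
        (rightInner_mul hassoc hβ.map_mul hψ.map_mul hβ.comm_ψ hsα),
      map_rightInner hβ.comm_ω hsβ]
  have hcross := assoc_map_rightInner_lT2 hassoc hα hβ hψ hω hrβ hrψ hsα hsω a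
  rw [deltaOp_apply r s a]
  simp only [map_sub, map_add, hleft, hright, hcross,
    map_lT2_of_comm hω.map_mul (hβ.map_deltaOp hrβ hsβ),
    assoc_map_rT2_of_comm hψ.map_mul (hα.map_deltaOp hrα hsα)]
  abel

theorem isCovariantBiHomBialgebra_deltaOp
    (hrω : TensorProduct.map ω ω r = r) (hsψ : TensorProduct.map ψ ψ s = s)
    (hr : TensorProduct.map ω (deltaOp α β ψ ω r s) r =
      m1312 α.toLinearMap β.toLinearMap ψ ω (r ⊗ₜ[K] r))
    (hs : TensorProduct.assoc K A A A (TensorProduct.map (deltaOp α β ψ ω r s) ψ s) =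
      -m2313 α.toLinearMap β.toLinearMap ψ ω (s ⊗ₜ[K] s)) :
    IsCovariantBiHomBialgebra α.toLinearMap β.toLinearMap ψ ω
      (deltaOp α β ψ ω r r) (deltaOp α β ψ ω s s) (deltaOp α β ψ ω r s) := by
  have hcoassoc (a : A) : TensorProduct.assoc K A A A
        (TensorProduct.map (deltaOp α β ψ ω r s) ψ (deltaOp α β ψ ω r s a)) =
      TensorProduct.map ω (deltaOp α β ψ ω r s) (deltaOp α β ψ ω r s a) := by
    rw [← sub_eq_zero, coassociator_deltaOp hassoc hα hβ hψ hω hrα hrβ hrψ hsα hsβ hsω, hr, hs,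
      sub_self, neg_add_cancel, map_zero, map_zero, sub_zero]
  have hmul {u v : A ⊗[K] A} (huβ : TensorProduct.map β.toLinearMap β.toLinearMap u = u)
      (hvα : TensorProduct.map α.toLinearMap α.toLinearMap v = v) :=
    deltaOp_mul hassoc hα.map_mul hβ.map_mul hψ.map_mul hω.map_mul hα.comm_ω hβ.comm_ψ huβ hvα
  exact ⟨hψ.map_deltaOp hrψ hsψ, hω.map_deltaOp hrω hsω, hα.map_deltaOp hrα hsα,
    hβ.map_deltaOp hrβ hsβ, hcoassoc,
    hα.map_deltaOp hrα hrα, hβ.map_deltaOp hrβ hrβ, hψ.map_deltaOp hrψ hrψ,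
    hω.map_deltaOp hrω hrω, hmul hrβ hrα r,
    hα.map_deltaOp hsα hsα, hβ.map_deltaOp hsβ hsβ, hψ.map_deltaOp hsψ hsψ,
    hω.map_deltaOp hsω hsω, hmul hsβ hsα s,
    fun a b => (hmul hrβ hsα r a b).trans (add_comm _ _), hmul hrβ hsα s⟩

end Coassociativity

end Delta

/-- Theorem 2.26 / Theorem 2.15 of the paper: with the data of
Statement 11, `(A, μ, δ_r, δ_s, Δ, α, β, ψ, ω)` is a quasitriangular covariant
BiHom-bialgebra (equivalently, `(r, s)` is an associative BiHom-Yang-Baxter pair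
of weight `(0, 0)`) if and only if `(ω⊗Δ)(r) = r₁₃r₁₂` and `(Δ⊗ψ)(s) = −s₂₃s₁₃`. -/
theorem stmt13 {K A : Type*} [Field K] [NonUnitalNonAssocRing A] [Module K A]
    [SMulCommClass K A A] [IsScalarTower K A A]
    (α β : A ≃ₗ[K] A) (ψ ω : A →ₗ[K] A) (r s : A ⊗[K] A)
    -- BiHom-associative algebra axioms for (A, ·, α, β)
    (hαmul : ∀ a b, α (a * b) = α a * α b)
    (hβmul : ∀ a b, β (a * b) = β a * β b)
    (hassoc : ∀ a b c, α a * (b * c) = (a * b) * β c)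
    -- ψ, ω multiplicative
    (hψmul : ∀ a b, ψ (a * b) = ψ a * ψ b)
    (hωmul : ∀ a b, ω (a * b) = ω a * ω b)
    -- α, β, ψ, ω pairwise commute
    (hαβ : ∀ a, α (β a) = β (α a)) (hαψ : ∀ a, α (ψ a) = ψ (α a))
    (hαω : ∀ a, α (ω a) = ω (α a)) (hβψ : ∀ a, β (ψ a) = ψ (β a))
    (hβω : ∀ a, β (ω a) = ω (β a)) (hψω : ∀ a, ψ (ω a) = ω (ψ a))
    -- r, s are α-, β-, ψ-, ω-invariant
    (hrα : TensorProduct.map α.toLinearMap α.toLinearMap r = r)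
    (hrβ : TensorProduct.map β.toLinearMap β.toLinearMap r = r)
    (hrψ : TensorProduct.map ψ ψ r = r)
    (hrω : TensorProduct.map ω ω r = r)
    (hsα : TensorProduct.map α.toLinearMap α.toLinearMap s = s)
    (hsβ : TensorProduct.map β.toLinearMap β.toLinearMap s = s)
    (hsψ : TensorProduct.map ψ ψ s = s)
    (hsω : TensorProduct.map ω ω s = s) :
    -- (A, μ, δ_r, δ_s, Δ, α, β, ψ, ω) is a quasitriangular covariant
    -- BiHom-bialgebra, i.e. (r, s) is an abhYBp of weight (0, 0) …
    ((m1312 α.toLinearMap β.toLinearMap ψ ω (r ⊗ₜ[K] r)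
        - m1223 α.toLinearMap β.toLinearMap (r ⊗ₜ[K] r)
        + m2313 α.toLinearMap β.toLinearMap ψ ω (s ⊗ₜ[K] r) = 0) ∧
     (m1312 α.toLinearMap β.toLinearMap ψ ω (s ⊗ₜ[K] r)
        - m1223 α.toLinearMap β.toLinearMap (s ⊗ₜ[K] s)
        + m2313 α.toLinearMap β.toLinearMap ψ ω (s ⊗ₜ[K] s) = 0) ∧
     IsCovariantBiHomBialgebra α.toLinearMap β.toLinearMap ψ ω
       (deltaOp α β ψ ω r r) (deltaOp α β ψ ω s s) (deltaOp α β ψ ω r s))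
    ↔
    -- … iff (ω⊗Δ)(r) = r₁₃r₁₂ and (Δ⊗ψ)(s) = −s₂₃s₁₃
    ((TensorProduct.map ω (deltaOp α β ψ ω r s) r =
        m1312 α.toLinearMap β.toLinearMap ψ ω (r ⊗ₜ[K] r)) ∧
     (TensorProduct.assoc K A A A (TensorProduct.map (deltaOp α β ψ ω r s) ψ s) =
        - m2313 α.toLinearMap β.toLinearMap ψ ω (s ⊗ₜ[K] s))) := by
  have hα : IsBiHomEndomorphism α.toLinearMap β.toLinearMap ψ ω α.toLinearMap :=
    ⟨hαmul, fun _ => rfl, hαβ, hαψ, hαω⟩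
  have hβ : IsBiHomEndomorphism α.toLinearMap β.toLinearMap ψ ω β.toLinearMap :=
    ⟨hβmul, fun a => (hαβ a).symm, fun _ => rfl, hβψ, hβω⟩
  have hψ : IsBiHomEndomorphism α.toLinearMap β.toLinearMap ψ ω ψ :=
    ⟨hψmul, fun a => (hαψ a).symm, fun a => (hβψ a).symm, fun _ => rfl, hψω⟩
  have hω : IsBiHomEndomorphism α.toLinearMap β.toLinearMap ψ ω ω :=
    ⟨hωmul, fun a => (hαω a).symm, fun a => (hβω a).symm, fun a => (hψω a).symm, fun _ => rfl⟩
  have hleft := yangBaxter_left_iff (ψ := ψ) (s := s) hαω hβω hrα hrβ hrω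
  have hright := yangBaxter_right_iff (ω := ω) (r := r) hαψ hβψ hsα hsβ hsψ
  exact ⟨fun ⟨hr, hs, _⟩ => ⟨hleft.1 hr, hright.1 hs⟩, fun ⟨hr, hs⟩ =>
    ⟨hleft.2 hr, hright.2 hs, isCovariantBiHomBialgebra_deltaOp hassoc hα hβ hψ hω
      hrα hrβ hrψ hsα hsβ hsω hrω hsψ hr hs⟩⟩
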